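/- Let Δ be a finite ranked signature with a projective yield function whose terminal alphabet contains the letters a, b, c, d. Let C_1, C_2, C_3, C_4 be contexts and t_5 a term over Δ, and set t = C_1[C_2[C_3[C_4[t_5]]]] and t' = C_1[C_3[t_5]]. Assume count_a(yield(t)) = count_c(yield(t)), count_b(yield(t)) = count_d(yield(t)), count_a(yield(t')) = count_c(yield(t')), and count_b(yield(t')) = count_d(yield(t')). Let s = leftc(C_2)·leftc(C_4)·rightc(C_4)·rightc(C_2). Then count_a(s) = count_c(s) and count_b(s) = count_d(s). -/

import Mathlib

/-- Terms over a ranked signature `Δ` with arity function `ar`. -/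
inductive PTerm (Δ : Type*) (ar : Δ → ℕ) : Type _
  | node (f : Δ) (ts : Fin (ar f) → PTerm Δ ar) : PTerm Δ ar

variable {Δ : Type*} {ar : Δ → ℕ} {σ : Type*}

/-- Yield of a term, given a yield function on symbols: `yield (f(t_1,…,t_k))` is
`Y f` with each variable `x_i` replaced by the yield of `t_i`. -/
def PTerm.yield (Y : ∀ f : Δ, List (σ ⊕ Fin (ar f))) : PTerm Δ ar → List σ
  | .node f ts => (Y f).flatMap fun s => match s with
      | .inl a => [a]
      | .inr i => (ts i).yield Y

/-- Projectivity: in `Y f`, each variable occurs exactly once, and the variables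
occur in the order `x_1, …, x_k` from left to right. -/
def Projective (Y : ∀ f : Δ, List (σ ⊕ Fin (ar f))) : Prop :=
  ∀ f : Δ, (Y f).filterMap Sum.getRight? = List.ofFn (fun i : Fin (ar f) => i)

/-- One-hole contexts over `Δ`: either the hole, or a node whose `i`-th child is
again a context (the others being terms; the value `ts i` is irrelevant). -/
inductive Ctx (Δ : Type*) (ar : Δ → ℕ) : Type _
  | hole : Ctx Δ ar
  | node (f : Δ) (i : Fin (ar f)) (C : Ctx Δ ar) (ts : Fin (ar f) → PTerm Δ ar) : Ctx Δ ar

/-- `C.subst t` plugs the term `t` into the hole of the context `C`. -/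
def Ctx.subst : Ctx Δ ar → PTerm Δ ar → PTerm Δ ar
  | .hole, t => t
  | .node f i C ts, t => .node f fun j => if j = i then C.subst t else ts j

/-- Yield of a context, with `none` marking the hole. -/
def Ctx.cyield (Y : ∀ f : Δ, List (σ ⊕ Fin (ar f))) : Ctx Δ ar → List (Option σ)
  | .hole => [none]
  | .node f i C ts => (Y f).flatMap fun s => match s with
      | .inl a => [some a]
      | .inr j => if j = i then C.cyield Y else ((ts j).yield Y).map some

/-- The part of the yield of a context to the left of the hole. -/
def Ctx.leftc (Y : ∀ f : Δ, List (σ ⊕ Fin (ar f))) (C : Ctx Δ ar) : List σ :=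
  ((C.cyield Y).takeWhile fun o => o.isSome).reduceOption

/-- The part of the yield of a context to the right of the hole. -/
def Ctx.rightc (Y : ∀ f : Δ, List (σ ⊕ Fin (ar f))) (C : Ctx Δ ar) : List σ :=
  (((C.cyield Y).dropWhile fun o => o.isSome).tail).reduceOption

/-- `yield(C) = leftc(C) · rightc(C)`. -/
def Ctx.yieldc (Y : ∀ f : Δ, List (σ ⊕ Fin (ar f))) (C : Ctx Δ ar) : List σ :=
  C.leftc Y ++ C.rightc Y

/-- Height of a term: 1 plus the maximum height of the children. -/
def PTerm.height : PTerm Δ ar → ℕ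
  | .node _ ts => 1 + Finset.univ.sup fun i => (ts i).height

/-- Height of a context, viewed as a term (the hole is a nullary node). -/
def Ctx.height : Ctx Δ ar → ℕ
  | .hole => 1
  | .node _ i C ts =>
      1 + max C.height (Finset.univ.sup fun j => if j = i then 0 else (ts j).height)

/-- `Subtree s t`: `s` is a subtree of `t` (a term rooted at a node of `t`). -/
inductive Subtree : PTerm Δ ar → PTerm Δ ar → Prop
  | refl (t : PTerm Δ ar) : Subtree t t
  | child {s : PTerm Δ ar} (f : Δ) (ts : Fin (ar f) → PTerm Δ ar) (i : Fin (ar f)) :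
      Subtree s (ts i) → Subtree s (.node f ts)

/-- `StrictSubtree s t`: `s` is a subtree of a child of `t`. -/
def StrictSubtree (s t : PTerm Δ ar) : Prop :=
  ∃ (f : Δ) (ts : Fin (ar f) → PTerm Δ ar) (i : Fin (ar f)),
    t = PTerm.node f ts ∧ Subtree s (ts i)

/-- `t.Pos p`: the list of child indices `p` is (the address of) a node of `t`. -/
inductive PTerm.Pos : PTerm Δ ar → List ℕ → Prop
  | nil (t : PTerm Δ ar) : Pos t []
  | cons (f : Δ) (ts : Fin (ar f) → PTerm Δ ar) (i : Fin (ar f)) {p : List ℕ} :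
      Pos (ts i) p → Pos (.node f ts) (i.val :: p)

/-- The address of the hole of a context. -/
def Ctx.holePath : Ctx Δ ar → List ℕ
  | .hole => []
  | .node _ i C _ => i.val :: C.holePath

/-- Sum, over the nodes of a term, of a weight attached to the node labels
(e.g. the number of `z`-labelled edges contributed by each node). -/
def PTerm.esum (w : Δ → ℕ) : PTerm Δ ar → ℕ
  | .node f ts => w f + Finset.univ.sum fun i => (ts i).esum w

/-- `(D_x, D_0, t_y)` is an `x,y,l`-separation of `t`. -/
def IsSep [DecidableEq σ] (Y : ∀ f : Δ, List (σ ⊕ Fin (ar f))) (x y : σ) (l : ℕ)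
    (t : PTerm Δ ar) (Dx D0 : Ctx Δ ar) (ty : PTerm Δ ar) : Prop :=
  t = Dx.subst (D0.subst ty) ∧ (Dx.yieldc Y).count y = 0 ∧
    (D0.yieldc Y).count x ≤ l ∧ (ty.yield Y).count x = 0

/-- `t` is `x,y,l`-separated. -/
def Separated [DecidableEq σ] (Y : ∀ f : Δ, List (σ ⊕ Fin (ar f))) (x y : σ) (l : ℕ)
    (t : PTerm Δ ar) : Prop :=
  ∃ Dx D0 ty, IsSep Y x y l t Dx D0 ty

/-- The four-letter alphabet `{a, b, c, d}`. -/
inductive ABCD | a | b | c | d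
deriving DecidableEq

/-!
When every variable occurs exactly once in each `Y f`, a context contributes one hole to its yield,
so that `yield (C[t]) = leftc C · yield t · rightc C`. Removing `C₂` and `C₄` from `t` therefore
removes precisely the letters of `s`, and the balance of `s` between two letters is the difference
of their balances in `yield t` and `yield t'`.
-/

/-- Linearity of a yield function: each variable `x_i` occurs exactly once in `Y f`, the variables
appearing in any order. The count is taken over `Fin (ar f)`, so `σ` needs no decidable equality. -/
def IsLinearYield (Y : ∀ f : Δ, List (σ ⊕ Fin (ar f))) : Prop :=
  ∀ (f : Δ) (i : Fin (ar f)), ((Y f).filterMap Sum.getRight?).count i = 1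

theorem Projective.isLinearYield {Y : ∀ f : Δ, List (σ ⊕ Fin (ar f))} (hY : Projective Y) :
    IsLinearYield Y := fun f i => by
  rw [hY f]
  exact List.count_eq_one_of_mem (List.nodup_ofFn.2 Function.injective_id) (by simp)

theorem countP_flatMap_eq_countP {α β : Type*} {p : β → Bool} {q : α → Bool} {g : α → List β}
    (hg : ∀ x, (g x).countP p = if q x then 1 else 0) (l : List α) :
    (l.flatMap g).countP p = l.countP q := by
  induction l with
  | nil => rfl
  | cons x l ih => rw [List.flatMap_cons, List.countP_append, List.countP_cons, ih, hg, add_comm]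

theorem eq_append_none_cons_of_countP_isNone_eq_one {α : Type*} {l : List (Option α)}
    (h : l.countP Option.isNone = 1) :
    l = (l.takeWhile Option.isSome).reduceOption.map some ++
      none :: (l.dropWhile Option.isSome).tail.reduceOption.map some := by
  induction l with
  | nil => simp at h
  | cons o l ih =>
    cases o with
    | some x => simpa using ih (by simpa using h)
    | none =>
      have all_isSome : ∀ o ∈ l, o.isSome := by simpa [Option.isSome_iff_ne_none] using h
      have map_some_reduceOption : l.reduceOption.map some = l := by
        rw [List.reduceOption, List.map_filterMap_some_eq_filter_map_isSome, List.map_id,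
          List.filter_eq_self.2 all_isSome]
      simp [map_some_reduceOption]

theorem Ctx.yield_subst_eq_flatMap_cyield (Y : ∀ f : Δ, List (σ ⊕ Fin (ar f))) (C : Ctx Δ ar)
    (t : PTerm Δ ar) :
    (C.subst t).yield Y = (C.cyield Y).flatMap fun o => o.elim (t.yield Y) fun x => [x] := by
  induction C with
  | hole => simp [Ctx.subst, Ctx.cyield]
  | node f i C ts ih =>
    rw [Ctx.subst, PTerm.yield, Ctx.cyield, List.flatMap_assoc]
    congr 1 with s : 1
    rcases s with x | j
    · simp
    · by_cases hj : j = i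
      · simp [hj, ih]
      · simp [hj, List.flatMap_map]

namespace IsLinearYield

variable {Y : ∀ f : Δ, List (σ ⊕ Fin (ar f))}

theorem countP_isNone_cyield (hY : IsLinearYield Y) (C : Ctx Δ ar) :
    (C.cyield Y).countP Option.isNone = 1 := by
  induction C with
  | hole => rfl
  | node f i C ts ih =>
    rw [Ctx.cyield, ← hY f i, List.count_filterMap]
    refine countP_flatMap_eq_countP (fun u => ?_) (Y f)
    rcases u with x | j
    · simp
    · by_cases hj : j = i
      · simp [hj, ih]
      · simp [hj]

theorem cyield_eq (hY : IsLinearYield Y) (C : Ctx Δ ar) :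
    C.cyield Y = (C.leftc Y).map some ++ none :: (C.rightc Y).map some :=
  eq_append_none_cons_of_countP_isNone_eq_one (hY.countP_isNone_cyield C)

theorem yield_subst (hY : IsLinearYield Y) (C : Ctx Δ ar) (t : PTerm Δ ar) :
    (C.subst t).yield Y = C.leftc Y ++ t.yield Y ++ C.rightc Y := by
  rw [C.yield_subst_eq_flatMap_cyield, hY.cyield_eq]
  simp [List.flatMap_map]

theorem count_yield_subst₄ [DecidableEq σ] (hY : IsLinearYield Y) (C₁ C₂ C₃ C₄ : Ctx Δ ar)
    (t : PTerm Δ ar) (x : σ) :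
    ((C₁.subst (C₂.subst (C₃.subst (C₄.subst t)))).yield Y).count x =
      ((C₁.subst (C₃.subst t)).yield Y).count x +
        (C₂.leftc Y ++ C₄.leftc Y ++ C₄.rightc Y ++ C₂.rightc Y).count x := by
  simp only [hY.yield_subst, List.count_append]
  ring

end IsLinearYield

theorem statement6_general [DecidableEq σ] {Y : ∀ f : Δ, List (σ ⊕ Fin (ar f))}
    (hY : IsLinearYield Y) {x y : σ} {C₁ C₂ C₃ C₄ : Ctx Δ ar} {t₅ t t' : PTerm Δ ar}
    (ht : t = C₁.subst (C₂.subst (C₃.subst (C₄.subst t₅))))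
    (ht' : t' = C₁.subst (C₃.subst t₅))
    (h : (t.yield Y).count x = (t.yield Y).count y)
    (h' : (t'.yield Y).count x = (t'.yield Y).count y)
    {s : List σ} (hs : s = C₂.leftc Y ++ C₄.leftc Y ++ C₄.rightc Y ++ C₂.rightc Y) :
    s.count x = s.count y := by
  have removed (z : σ) : (t.yield Y).count z = (t'.yield Y).count z + s.count z := by
    rw [ht, ht', hs, hY.count_yield_subst₄]
  rw [removed, removed, h'] at h
  exact Nat.add_left_cancel h

/-- with `t = C₁[C₂[C₃[C₄[t₅]]]]`, `t' = C₁[C₃[t₅]]` and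
`s = leftc(C₂)·leftc(C₄)·rightc(C₄)·rightc(C₂)`, the count hypotheses on `t` and `t'`
imply `count_a(s) = count_c(s)` and `count_b(s) = count_d(s)`. -/
theorem statement6 {Δ : Type*} {ar : Δ → ℕ} {σ : Type*} [DecidableEq σ]
    (Y : ∀ f : Δ, List (σ ⊕ Fin (ar f))) (hY : Projective Y)
    (a b c d : σ) (hdist : ([a, b, c, d] : List σ).Nodup)
    (C₁ C₂ C₃ C₄ : Ctx Δ ar) (t₅ : PTerm Δ ar)
    (t t' : PTerm Δ ar)
    (ht : t = C₁.subst (C₂.subst (C₃.subst (C₄.subst t₅))))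
    (ht' : t' = C₁.subst (C₃.subst t₅))
    (hac : (t.yield Y).count a = (t.yield Y).count c)
    (hbd : (t.yield Y).count b = (t.yield Y).count d)
    (hac' : (t'.yield Y).count a = (t'.yield Y).count c)
    (hbd' : (t'.yield Y).count b = (t'.yield Y).count d)
    (s : List σ)
    (hs : s = C₂.leftc Y ++ C₄.leftc Y ++ C₄.rightc Y ++ C₂.rightc Y) :
    s.count a = s.count c ∧ s.count b = s.count d := by
  exact ⟨statement6_general hY.isLinearYield ht ht' hac hac' hs,
    statement6_general hY.isLinearYield ht ht' hbd hbd' hs⟩
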